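/- If κ carries a normal fine κ-complete ultrafilter on P_κ(κ⁺) (i.e., κ is κ⁺-supercompact) and the set of strongly compact cardinals below κ is unbounded in κ, then κ is strongly compact. -/

import Mathlib

/-!
A `κ`-complete ultrafilter is constant on a large set along any map into the power set of a set of
size less than `κ`, so a nonprincipal one on `κ` makes `κ` a strong limit. Sending `s ∈ P_κ(κ⁺)` to
the least ordinal missing from `s` pushes a fine ultrafilter to a nonprincipal one on `κ`; hence the
theorem reduces to that of Menas, that a measurable limit of strongly compact cardinals is strongly
compact. For the latter let `F` be a `κ`-complete nonprincipal ultrafilter on `κ`. For `ξ < κ` pick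
a strongly compact `μ ξ < κ` with `|ξ| < μ ξ`, and a `μ ξ`-complete fine ultrafilter `ν ξ` on
`P_{μ ξ}(lam)`. The limit of the `ν ξ` along `F` is fine, and it is `κ`-complete because every
`d < κ` lies below `μ ξ` for `F`-almost all `ξ`.
-/

open Cardinal Set

/-- `P_κ(λ)`: the collection of all sets of ordinals below `λ` of cardinality less than `κ`. -/
def smallSubsets (κ lam : Cardinal.{0}) : Set (Set Ordinal.{0}) :=
  {s | (∀ α ∈ s, α < lam.ord) ∧ #s < Cardinal.lift.{1} κ}

/-- `U` is an ultrafilter on the set `A`. -/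
structure IsUltrafilterOn {α : Type*} (A : Set α) (U : Set (Set α)) : Prop where
  sets_subset : ∀ Y ∈ U, Y ⊆ A
  base_mem : A ∈ U
  empty_not_mem : ∅ ∉ U
  superset_mem : ∀ Y ∈ U, ∀ Z ⊆ A, Y ⊆ Z → Z ∈ U
  inter_mem : ∀ Y ∈ U, ∀ Z ∈ U, Y ∩ Z ∈ U
  mem_or_compl_mem : ∀ Y ⊆ A, Y ∈ U ∨ A \ Y ∈ U

/-- `U` is `κ`-complete: the intersection of fewer than `κ` members of `U` is in `U`. -/
def IsKappaComplete {α : Type 1} (κ : Cardinal.{0}) (A : Set α) (U : Set (Set α)) : Prop :=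
  ∀ F : Set (Set α), F ⊆ U → #F < Cardinal.lift.{1} κ → A ∩ ⋂₀ F ∈ U

/-- `U` is a fine (ultra)filter on `P_κ(λ)`. -/
def IsFine (κ lam : Cardinal.{0}) (U : Set (Set (Set Ordinal.{0}))) : Prop :=
  ∀ α < lam.ord, {s ∈ smallSubsets κ lam | α ∈ s} ∈ U

/-- `κ` is `λ`-strongly compact: there is a `κ`-complete fine ultrafilter on `P_κ(λ)`. -/
def IsStronglyCompactIn (κ lam : Cardinal.{0}) : Prop :=
  ∃ U : Set (Set (Set Ordinal.{0})), IsUltrafilterOn (smallSubsets κ lam) U ∧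
    IsKappaComplete κ (smallSubsets κ lam) U ∧ IsFine κ lam U

/-- `κ` is strongly compact: `λ`-strongly compact for every cardinal `λ ≥ κ`. -/
def IsStronglyCompactCard (κ : Cardinal.{0}) : Prop :=
  ∀ lam, κ ≤ lam → IsStronglyCompactIn κ lam

/-- `κ` is measurable: uncountable, with a `κ`-complete nonprincipal ultrafilter on `κ`
(identified with the set of ordinals below `κ`). -/
def IsMeasurableCard (κ : Cardinal.{0}) : Prop :=
  ℵ₀ < κ ∧ ∃ U : Set (Set Ordinal.{0}), IsUltrafilterOn (Set.Iio κ.ord) U ∧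
    IsKappaComplete κ (Set.Iio κ.ord) U ∧ ∀ γ : Ordinal.{0}, {γ} ∉ U

/-- `U` is a normal (ultra)filter on `P_κ(λ)`: it is closed under diagonal intersections
of `λ`-indexed families of its members. -/
def IsNormalOn (κ lam : Cardinal.{0}) (U : Set (Set (Set Ordinal.{0}))) : Prop :=
  ∀ A : Ordinal.{0} → Set (Set Ordinal.{0}), (∀ α < lam.ord, A α ∈ U) →
    {s ∈ smallSubsets κ lam | ∀ α ∈ s, s ∈ A α} ∈ U

/-- `κ` is `λ`-supercompact: there is a normal fine `κ`-complete ultrafilter on `P_κ(λ)`. -/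
def IsSupercompactIn (κ lam : Cardinal.{0}) : Prop :=
  ∃ U : Set (Set (Set Ordinal.{0})), IsUltrafilterOn (smallSubsets κ lam) U ∧
    IsKappaComplete κ (smallSubsets κ lam) U ∧ IsFine κ lam U ∧ IsNormalOn κ lam U

section UltrafilterOn

variable {α : Type*} {A : Set α} {U : Set (Set α)}

/-- The ultrafilter on the whole type `α` generated by an ultrafilter `U` on `A ⊆ α`. It makes
Mathlib's `Ultrafilter` and `CardinalInterFilter` available for `U`. -/
def IsUltrafilterOn.toUltrafilter (hU : IsUltrafilterOn A U) : Ultrafilter α :=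
  .ofComplNotMemIff
    { sets := {Y | A ∩ Y ∈ U}
      univ_sets := by simpa only [mem_ofPred_eq, inter_univ] using hU.base_mem
      sets_of_superset := fun hY hYZ =>
        hU.superset_mem _ hY _ inter_subset_left (inter_subset_inter_right A hYZ)
      inter_sets := fun {Y Z} hY hZ => by
        change A ∩ (Y ∩ Z) ∈ U
        rw [inter_inter_distrib_left]
        exact hU.inter_mem _ hY _ hZ }
    fun Y => by
      change A ∩ Yᶜ ∉ U ↔ A ∩ Y ∈ U
      have hcompl : A ∩ Yᶜ = A \ (A ∩ Y) := by rw [sdiff_self_inter, Set.sdiff_eq]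
      constructor
      · intro h
        exact (hU.mem_or_compl_mem (A ∩ Y) inter_subset_left).resolve_right (hcompl ▸ h)
      · intro h h'
        apply hU.empty_not_mem
        simpa only [hcompl, inter_sdiff_self] using hU.inter_mem _ h _ h'

theorem IsUltrafilterOn.mem_toUltrafilter (hU : IsUltrafilterOn A U) {Y : Set α} :
    Y ∈ hU.toUltrafilter ↔ A ∩ Y ∈ U :=
  Iff.rfl

theorem IsUltrafilterOn.self_mem_toUltrafilter (hU : IsUltrafilterOn A U) :
    A ∈ hU.toUltrafilter := by
  simpa only [hU.mem_toUltrafilter, inter_self] using hU.base_mem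

/-- The trace on `A` of an ultrafilter on the whole type, as a family of subsets of `A`. It is an
ultrafilter on `A` in the sense of `IsUltrafilterOn` when `A ∈ F`. -/
def ultrafilterTrace (F : Ultrafilter α) (A : Set α) : Set (Set α) :=
  {Y | Y ⊆ A ∧ Y ∈ F}

theorem isUltrafilterOn_ultrafilterTrace {F : Ultrafilter α} (hA : A ∈ F) :
    IsUltrafilterOn A (ultrafilterTrace F A) where
  sets_subset _ hY := hY.1
  base_mem := ⟨Subset.rfl, hA⟩
  empty_not_mem h := F.empty_notMem h.2
  superset_mem _ hY _ hZ hYZ := ⟨hZ, Filter.mem_of_superset hY.2 hYZ⟩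
  inter_mem _ hY _ hZ := ⟨inter_subset_left.trans hY.1, Filter.inter_mem hY.2 hZ.2⟩
  mem_or_compl_mem Y hY := (F.mem_or_compl_mem Y).imp (fun h => ⟨hY, h⟩)
    fun h => ⟨sdiff_subset, Filter.inter_mem hA h⟩

end UltrafilterOn

section Completeness

theorem IsKappaComplete.cardinalInterFilter_toUltrafilter {α : Type 1} {A : Set α}
    {U : Set (Set α)} {κ : Cardinal.{0}} (hc : IsKappaComplete κ A U) (hU : IsUltrafilterOn A U) :
    CardinalInterFilter (hU.toUltrafilter : Filter α) (lift.{1} κ) where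
  cardinal_sInter_mem S hS hSU := by
    have h : A ∩ ⋂₀ ((A ∩ ·) '' S) ∈ U :=
      hc _ (image_subset_iff.2 hSU) (mk_image_le.trans_lt hS)
    refine hU.superset_mem _ h _ inter_subset_left fun x hx => ⟨hx.1, fun Y hY => ?_⟩
    exact (hx.2 _ (mem_image_of_mem _ hY)).2

theorem isKappaComplete_ultrafilterTrace {α : Type 1} {A : Set α} {κ : Cardinal.{0}}
    {F : Ultrafilter α} [CardinalInterFilter (F : Filter α) (lift.{1} κ)] (hA : A ∈ F) :
    IsKappaComplete κ A (ultrafilterTrace F A) := fun _ hS hSκ =>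
  ⟨inter_subset_left, Filter.inter_mem hA ((cardinal_sInter_mem hSκ).2 fun _ hY => (hS hY).2)⟩

universe u

variable {α : Type u} {c : Cardinal.{u}} (F : Ultrafilter α)
  [CardinalInterFilter (F : Filter α) c]

theorem exists_eventually_eq_const {ι : Type u} (hι : #ι < c) (f : α → Set ι) :
    ∃ t, ∀ᶠ x in F, f x = t := by
  use {i | ∀ᶠ x in F, i ∈ f x}
  simp only [Set.ext_iff]
  refine (Filter.eventually_cardinal_forall hι).2 fun i => ?_
  by_cases hi : ∀ᶠ x in F, i ∈ f x
  · filter_upwards [hi] with x hx using iff_of_true hx hi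
  · filter_upwards [Ultrafilter.eventually_not.2 hi] with x hx using iff_of_false hx hi

theorem exists_singleton_mem_of_mk_le_two_power {A : Set α} (hA : A ∈ F) {d : Cardinal.{u}}
    (hd : d < c) (hAd : #A ≤ 2 ^ d) : ∃ a, {a} ∈ F := by
  obtain ⟨code⟩ : #A ≤ #(Set d.out) := by rwa [mk_set, mk_out]
  have hrange : range ((↑) : A → α) ∈ F := by rwa [Subtype.range_coe]
  let G : Ultrafilter A := F.comap Subtype.val_injective hrange
  have : CardinalInterFilter (G : Filter A) c :=
    inferInstanceAs (CardinalInterFilter (Filter.comap _ (F : Filter α)) c)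
  obtain ⟨t, ht⟩ := exists_eventually_eq_const G (by rwa [mk_out]) code
  obtain ⟨a, ha⟩ := ht.exists
  have hG : {a} ∈ G := by
    filter_upwards [ht] with x hx using code.injective (hx.trans ha.symm)
  exact ⟨a, by simpa only [image_singleton] using (F.mem_comap _ _).1 hG⟩

theorem cardinalInterFilter_bind {β : Type u} (ν : α → Ultrafilter β)
    (hν : ∀ d < c, ∀ᶠ a in F, ∃ μ > d, CardinalInterFilter (ν a : Filter β) μ) :
    CardinalInterFilter (F.bind ν : Filter β) c where
  cardinal_sInter_mem S hS hSν := by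
    have hall : ∀ᶠ a in F, ∀ Y ∈ S, Y ∈ ν a := (Filter.eventually_cardinal_ball hS).2 hSν
    change ∀ᶠ a in F, ⋂₀ S ∈ ν a
    filter_upwards [hall, hν _ hS] with a ha ⟨μ, hμ, _⟩
    exact (cardinal_sInter_mem hμ).2 ha

end Completeness

section LargeCardinals

variable {κ lam : Cardinal.{0}}

/-- The ultrafilter `F` witnesses that `κ` is measurable: it is `κ`-complete, nonprincipal and
concentrates on `κ`, identified with the set of ordinals below `κ`. -/
structure IsCompleteNonprincipal (κ : Cardinal.{0}) (F : Ultrafilter Ordinal.{0}) : Prop where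
  cardinalInterFilter : CardinalInterFilter (F : Filter Ordinal.{0}) (lift.{1} κ)
  Iio_mem : Iio κ.ord ∈ F
  singleton_notMem : ∀ γ, {γ} ∉ F

theorem isMeasurableCard_iff : IsMeasurableCard κ ↔ ℵ₀ < κ ∧ ∃ F, IsCompleteNonprincipal κ F := by
  refine and_congr_right fun _ => ⟨?_, ?_⟩
  · rintro ⟨U, hU, hc, hnp⟩
    refine ⟨hU.toUltrafilter, hc.cardinalInterFilter_toUltrafilter hU,
      hU.self_mem_toUltrafilter, fun γ hγ => hnp γ ?_⟩
    have hne : (Iio κ.ord ∩ {γ}).Nonempty := Ultrafilter.nonempty_of_mem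
      (Filter.inter_mem hU.self_mem_toUltrafilter hγ)
    rwa [hU.mem_toUltrafilter, inter_eq_self_of_subset_right
      (singleton_subset_iff.2 (inter_singleton_nonempty.1 hne))] at hγ
  · rintro ⟨F, hF⟩
    have := hF.cardinalInterFilter
    exact ⟨_, isUltrafilterOn_ultrafilterTrace hF.Iio_mem,
      isKappaComplete_ultrafilterTrace hF.Iio_mem, fun γ hγ => hF.singleton_notMem γ hγ.2⟩

/-- The ultrafilter `F` witnesses that `κ` is `lam`-strongly compact: it is `κ`-complete and fine
and concentrates on `P_κ(lam)`. -/
structure IsCompleteFine (κ lam : Cardinal.{0}) (F : Ultrafilter (Set Ordinal.{0})) : Prop where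
  cardinalInterFilter : CardinalInterFilter (F : Filter (Set Ordinal.{0})) (lift.{1} κ)
  smallSubsets_mem : smallSubsets κ lam ∈ F
  eventually_mem : ∀ α < lam.ord, ∀ᶠ s in (F : Filter (Set Ordinal.{0})), α ∈ s

theorem isStronglyCompactIn_iff : IsStronglyCompactIn κ lam ↔ ∃ F, IsCompleteFine κ lam F := by
  constructor
  · rintro ⟨U, hU, hc, hfine⟩
    exact ⟨hU.toUltrafilter, hc.cardinalInterFilter_toUltrafilter hU,
      hU.self_mem_toUltrafilter, hfine⟩
  · rintro ⟨F, hF⟩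
    have := hF.cardinalInterFilter
    exact ⟨_, isUltrafilterOn_ultrafilterTrace hF.smallSubsets_mem,
      isKappaComplete_ultrafilterTrace hF.smallSubsets_mem, fun α hα =>
        ⟨sep_subset _ _, Filter.inter_mem hF.smallSubsets_mem (hF.eventually_mem α hα)⟩⟩

theorem smallSubsets_mono {μ : Cardinal.{0}} (h : μ ≤ κ) :
    smallSubsets μ lam ⊆ smallSubsets κ lam :=
  fun _ hs => ⟨hs.1, hs.2.trans_le (lift_le.2 h)⟩

theorem exists_lt_ord_notMem_of_mem_smallSubsets {s : Set Ordinal.{0}}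
    (hs : s ∈ smallSubsets κ lam) : ∃ α < κ.ord, α ∉ s := by
  by_contra! h
  have hκ : #(Iio κ.ord) ≤ #s := mk_le_mk_of_subset h
  rw [mk_Iio_ordinal, card_ord] at hκ
  exact hκ.not_gt hs.2

theorem IsCompleteNonprincipal.isStrongLimit {F : Ultrafilter Ordinal.{0}}
    (hF : IsCompleteNonprincipal κ F) : κ.IsStrongLimit where
  ne_zero := by
    rintro rfl
    obtain ⟨γ, hγ⟩ := Ultrafilter.nonempty_of_mem hF.Iio_mem
    exact not_lt_zero (lt_ord.1 hγ)
  isStrongPrelimit d hd := by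
    by_contra! hκ
    have := hF.cardinalInterFilter
    have hmk : #(Iio κ.ord) ≤ 2 ^ lift.{1} d := by
      rw [mk_Iio_ordinal, card_ord, ← lift_two_power]
      exact lift_le.2 hκ
    obtain ⟨γ, hγ⟩ := exists_singleton_mem_of_mk_le_two_power F hF.Iio_mem (lift_lt.2 hd) hmk
    exact hF.singleton_notMem γ hγ

theorem IsCompleteNonprincipal.eventually_le {F : Ultrafilter Ordinal.{0}}
    (hF : IsCompleteNonprincipal κ F) {γ : Ordinal.{0}} (hγ : γ < κ.ord) : ∀ᶠ ξ in F, γ ≤ ξ := by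
  have := hF.cardinalInterFilter
  have hmk : #(Iio γ) < lift.{1} κ := by
    rw [mk_Iio_ordinal]
    exact lift_lt.2 (lt_ord.1 hγ)
  have hne : ∀ᶠ ξ in F, ∀ δ ∈ Iio γ, ξ ≠ δ := (Filter.eventually_cardinal_ball hmk).2
    fun δ _ => Ultrafilter.eventually_not.2 (hF.singleton_notMem δ)
  filter_upwards [hne] with ξ hξ
  exact not_lt.1 fun h => hξ ξ h rfl

theorem IsCompleteFine.isCompleteNonprincipal_map (hκ : κ ≤ lam)
    {F : Ultrafilter (Set Ordinal.{0})} (hF : IsCompleteFine κ lam F) :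
    IsCompleteNonprincipal κ (F.map fun s => sInf sᶜ) := by
  have hIio : ∀ᶠ s in F, sInf sᶜ < κ.ord := by
    filter_upwards [hF.smallSubsets_mem] with s hs
    obtain ⟨α, hα, hαs⟩ := exists_lt_ord_notMem_of_mem_smallSubsets hs
    exact (csInf_le' (s := sᶜ) hαs).trans_lt hα
  have hmissing : ∀ᶠ s in (F : Filter (Set Ordinal.{0})), sInf sᶜ ∉ s := by
    filter_upwards [hF.smallSubsets_mem] with s hs
    obtain ⟨α, -, hαs⟩ := exists_lt_ord_notMem_of_mem_smallSubsets hs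
    exact csInf_mem (s := sᶜ) ⟨α, hαs⟩
  refine ⟨?_, hIio, fun γ hγ => ?_⟩
  · have := hF.cardinalInterFilter
    exact inferInstanceAs (CardinalInterFilter (Filter.map _ (F : Filter (Set Ordinal.{0}))) _)
  · have hconst : ∀ᶠ s in F, sInf sᶜ = γ := hγ
    obtain ⟨s, hs, hsκ⟩ := (hconst.and hIio).exists
    have hγlam : γ < lam.ord := hs ▸ hsκ.trans_le (ord_le_ord.2 hκ)
    obtain ⟨t, ht, hγt, hmiss⟩ :=
      (hconst.and ((hF.eventually_mem γ hγlam).and hmissing)).exists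
    exact hmiss (ht ▸ hγt)

theorem IsStronglyCompactIn.exists_isCompleteNonprincipal (h : IsStronglyCompactIn κ lam)
    (hκ : κ ≤ lam) : ∃ F, IsCompleteNonprincipal κ F := by
  obtain ⟨F, hF⟩ := isStronglyCompactIn_iff.1 h
  exact ⟨_, hF.isCompleteNonprincipal_map hκ⟩

theorem IsStronglyCompactIn.aleph0_le (h : IsStronglyCompactIn κ lam) (hκ : κ ≤ lam) : ℵ₀ ≤ κ := by
  obtain ⟨F, hF⟩ := h.exists_isCompleteNonprincipal hκ
  exact hF.isStrongLimit.aleph0_le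

theorem IsStronglyCompactIn.isMeasurableCard_of_limit (h : IsStronglyCompactIn κ lam) (hκ : κ ≤ lam)
    (hub : ∀ β < κ, ∃ μ : Cardinal.{0}, β ≤ μ ∧ μ < κ ∧ IsStronglyCompactCard μ) :
    IsMeasurableCard κ := by
  obtain ⟨μ, -, hμκ, hμ⟩ := hub 0 (aleph0_pos.trans_le (h.aleph0_le hκ))
  have hω : ℵ₀ ≤ μ := (hμ μ le_rfl).aleph0_le le_rfl
  exact isMeasurableCard_iff.2 ⟨hω.trans_lt hμκ, h.exists_isCompleteNonprincipal hκ⟩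

theorem IsSupercompactIn.isStronglyCompactIn (h : IsSupercompactIn κ lam) :
    IsStronglyCompactIn κ lam := by
  obtain ⟨U, hU, hc, hfine, -⟩ := h
  exact ⟨U, hU, hc, hfine⟩

theorem IsCompleteFine.bind {ι : Type 1} {F : Ultrafilter ι}
    [CardinalInterFilter (F : Filter ι) (lift.{1} κ)] {μ : ι → Cardinal.{0}}
    {ν : ι → Ultrafilter (Set Ordinal.{0})} (hμ : ∀ᶠ i in F, μ i ≤ κ)
    (hlim : ∀ d < κ, ∀ᶠ i in F, d < μ i) (hν : ∀ᶠ i in F, IsCompleteFine (μ i) lam (ν i)) :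
    IsCompleteFine κ lam (F.bind ν) where
  cardinalInterFilter := by
    refine cardinalInterFilter_bind F ν fun d hd => ?_
    obtain ⟨d, hdκ, rfl⟩ := lt_lift_iff.1 hd
    filter_upwards [hν, hlim d hdκ] with i hi hdi
    exact ⟨_, lift_lt.2 hdi, hi.cardinalInterFilter⟩
  smallSubsets_mem := by
    change ∀ᶠ i in F, smallSubsets κ lam ∈ ν i
    filter_upwards [hν, hμ] with i hi hiκ
    exact Filter.mem_of_superset hi.smallSubsets_mem (smallSubsets_mono hiκ)
  eventually_mem α hα := by
    change ∀ᶠ i in F, ∀ᶠ s in (ν i : Filter (Set Ordinal.{0})), α ∈ s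
    filter_upwards [hν] with i hi using hi.eventually_mem α hα

theorem stronglyCompact_of_succ_supercompact_limit_general (hκ : IsMeasurableCard κ)
    (hub : ∀ β < κ, ∃ μ : Cardinal.{0}, β ≤ μ ∧ μ < κ ∧ IsStronglyCompactCard μ) :
    IsStronglyCompactCard κ := by
  intro lam hlam
  obtain ⟨F, hF⟩ := (isMeasurableCard_iff.1 hκ).2
  have := hF.cardinalInterFilter
  have hstep : ∀ ξ < κ.ord, ∃ μ ν, ξ.card < μ ∧ μ ≤ κ ∧ IsCompleteFine μ lam ν := by
    intro ξ hξ
    obtain ⟨μ, hξμ, hμκ, hμ⟩ := hub _ (hF.isStrongLimit.isSuccLimit.succ_lt (lt_ord.1 hξ))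
    obtain ⟨ν, hν⟩ := isStronglyCompactIn_iff.1 (hμ lam (hμκ.le.trans hlam))
    exact ⟨μ, ν, Order.succ_le_iff.1 hξμ, hμκ.le, hν⟩
  choose! μ ν hξμ hμκ hν using hstep
  have hlim : ∀ d < κ, ∀ᶠ ξ in F, d < μ ξ := by
    intro d hd
    filter_upwards [hF.Iio_mem, hF.eventually_le (ord_lt_ord.2 hd)] with ξ hξ hdξ
    exact (ord_le.1 hdξ).trans_lt (hξμ ξ hξ)
  exact isStronglyCompactIn_iff.2 ⟨F.bind ν, .bind (Filter.mem_of_superset hF.Iio_mem hμκ) hlim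
    (Filter.mem_of_superset hF.Iio_mem hν)⟩

end LargeCardinals

/-- If `κ` is `κ⁺`-supercompact and the strongly compact cardinals below `κ` are
unbounded in `κ`, then `κ` is strongly compact. -/
theorem stronglyCompact_of_succ_supercompact_limit (κ : Cardinal.{0})
    (hsc : IsSupercompactIn κ (Order.succ κ))
    (hub : ∀ β < κ, ∃ μ : Cardinal.{0}, β ≤ μ ∧ μ < κ ∧ IsStronglyCompactCard μ) :
    IsStronglyCompactCard κ := by
  have hκ : IsMeasurableCard κ :=
    hsc.isStronglyCompactIn.isMeasurableCard_of_limit (Order.le_succ κ) hub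
  exact stronglyCompact_of_succ_supercompact_limit_general hκ hub
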